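/- Spatial semidiscretization error for the Schrödinger equation with bilinear control Hamiltonian: let φ : [0,T] × ℝ → ℂ be 1-periodic in its second argument, continuously differentiable in t, four times continuously differentiable in x (with all these derivatives continuous on [0,T] × ℝ), and satisfy i ∂_t φ(t,x) = -f1(t) ∂_x² φ(t,x) + f2(t) V(x) φ(t,x) for all (t,x) ∈ [0,T] × ℝ. Let ψ : [0,T] → ℂⁿ be the solution of the semidiscrete equation i ψ'(t) = (f1(t) H1 + f2(t) H2) ψ(t) with initial condition ψ(0) = (φ(0, k/n))_{k=0}^{n-1}, where H1 and H2 are the matrices of the finite-difference setting. Then for every t ∈ [0,T], (1/√n) · ‖(φ(t, k/n))_{k=0}^{n-1} - ψ(t)‖ ≤ (t/(3n²)) · (sup_{s∈[0,T]} |f1(s)|) · sup_{s∈[0,t], y∈[0,1]} |∂_x⁴ φ(s,y)|, where ‖·‖ is the Euclidean 2-norm on ℂⁿ. -/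

import Mathlib

open Matrix

noncomputable section

/-- Square `n × n` complex matrices. -/
abbrev Mat (n : ℕ) := Matrix (Fin n) (Fin n) ℂ

/-- The Euclidean 2-norm of a vector in `ℂⁿ`. -/
noncomputable def evnorm {n : ℕ} (v : Fin n → ℂ) : ℝ :=
  ‖(WithLp.equiv 2 (Fin n → ℂ)).symm v‖

/-- The `n×n` periodic central finite-difference discretization of `-Δ` on `[0,1]`:
`(H1)_{kk} = 2n²`, `(H1)_{k,k+1 mod n} = (H1)_{k,k-1 mod n} = -n²`, all other entries `0`. -/
noncomputable def fdH1 (n : ℕ) : Mat n :=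
  Matrix.of fun k l : Fin n =>
    if (l : ℕ) = (k : ℕ) then 2 * (n : ℂ)^2
    else if (l : ℕ) = ((k : ℕ) + 1) % n ∨ (l : ℕ) = ((k : ℕ) + n - 1) % n then -(n : ℂ)^2
    else 0

/-- The diagonal potential matrix `H2 = diag(V(0), V(1/n), …, V((n-1)/n))`. -/
noncomputable def fdH2 (n : ℕ) (V : ℝ → ℝ) : Mat n :=
  Matrix.diagonal fun k : Fin n => ((V (((k : ℕ) : ℝ) / (n : ℝ))) : ℂ)

/-- The difference matrix: `(D1)_{kk} = -n`, `(D1)_{k,k-1 mod n} = n`, all other entries `0`. -/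
noncomputable def fdD1 (n : ℕ) : Mat n :=
  Matrix.of fun k l : Fin n =>
    if (l : ℕ) = (k : ℕ) then -(n : ℂ)
    else if (l : ℕ) = ((k : ℕ) + n - 1) % n then (n : ℂ)
    else 0

theorem norm_sub_taylor_three_le {f : ℝ → ℂ} (hf : ContDiff ℝ 4 f) {M : ℝ}
    (hM : ∀ x, ‖iteratedDeriv 4 f x‖ ≤ M) (x : ℝ) {h : ℝ} (hh : 0 < h) :
    ‖f (x + h) - (f x + h • iteratedDeriv 1 f x + (h ^ 2 / 2) • iteratedDeriv 2 f x
      + (h ^ 3 / 6) • iteratedDeriv 3 f x)‖ ≤ M * h ^ 4 / 6 := by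
  have hlt : x < x + h := by linarith
  have hwithin : ∀ j : ℕ, j ≤ 4 → ∀ y ∈ Set.Icc x (x + h),
      iteratedDerivWithin j f (Set.Icc x (x + h)) y = iteratedDeriv j f y := by
    intro j hj y hy
    exact iteratedDerivWithin_eq_iteratedDeriv (uniqueDiffOn_Icc hlt)
      ((hf.of_le (by exact_mod_cast hj)).contDiffAt) hy
  have key := taylor_mean_remainder_bound (f := f) (a := x) (b := x + h) (n := 3) (C := M)
    (x := x + h) hlt.le (by exact_mod_cast hf.contDiffOn) ⟨hlt.le, le_rfl⟩
    (fun y hy => by rw [hwithin 4 le_rfl y hy]; exact hM y)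
  have hx : x ∈ Set.Icc x (x + h) := ⟨le_rfl, hlt.le⟩
  simp only [taylorWithinEval_succ, taylor_within_zero_eval, hwithin 1 (by norm_num) x hx,
    hwithin 2 (by norm_num) x hx, hwithin 3 (by norm_num) x hx, zero_add, Nat.reduceAdd] at key
  norm_num [Nat.factorial] at key
  convert key using 2
  congr 1
  simp only [Complex.real_smul, iteratedDeriv_one]
  push_cast
  ring

/-- Truncation error of the second-order central difference. -/
theorem norm_central_difference_sub_le {f : ℝ → ℂ} (hf : ContDiff ℝ 4 f) {M : ℝ}
    (hM : ∀ x, ‖iteratedDeriv 4 f x‖ ≤ M) (x : ℝ) {h : ℝ} (hh : 0 < h) :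
    ‖f (x + h) + f (x - h) - 2 * f x - (h : ℂ) ^ 2 * iteratedDeriv 2 f x‖ ≤ M * h ^ 4 / 3 := by
  have hr := norm_sub_taylor_three_le hf hM x hh
  have hl := norm_sub_taylor_three_le (f := fun y => f (-y)) (hf.comp contDiff_neg) (M := M)
    (fun y => by rw [iteratedDeriv_comp_neg]; simpa using hM (-y)) (-x) hh
  simp only [iteratedDeriv_comp_neg, neg_neg, neg_add, ← sub_eq_add_neg] at hl
  refine le_trans (le_of_eq_of_le ?_ (norm_add_le_of_le hr hl)) (by linarith)
  congr 1
  simp only [Complex.real_smul]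
  push_cast
  ring

theorem succ_mod_eq_ite {n k : ℕ} (hk : k < n) :
    (k + 1) % n = if k + 1 < n then k + 1 else 0 := by
  split_ifs with h
  · exact Nat.mod_eq_of_lt h
  · rw [show k + 1 = n by omega, Nat.mod_self]

theorem pred_mod_eq_ite {n k : ℕ} (hk : k < n) :
    (k + n - 1) % n = if k = 0 then n - 1 else k - 1 := by
  split_ifs with h
  · rw [h, zero_add]; exact Nat.mod_eq_of_lt (by omega)
  · rw [show k + n - 1 = (k - 1) + n by omega, Nat.add_mod_right]
    exact Nat.mod_eq_of_lt (by omega)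

theorem fdH1_isHermitian (n : ℕ) : (fdH1 n).IsHermitian := by
  ext k l
  have hk := k.isLt
  have hl := l.isLt
  simp only [fdH1, conjTranspose_apply, of_apply, succ_mod_eq_ite hk, succ_mod_eq_ite hl,
    pred_mod_eq_ite hk, pred_mod_eq_ite hl]
  have hsymm : (((k : ℕ) = if (l : ℕ) + 1 < n then (l : ℕ) + 1 else 0) ∨
      (k : ℕ) = if (l : ℕ) = 0 then n - 1 else (l : ℕ) - 1) ↔
      (((l : ℕ) = if (k : ℕ) + 1 < n then (k : ℕ) + 1 else 0) ∨
      (l : ℕ) = if (k : ℕ) = 0 then n - 1 else (k : ℕ) - 1) := by grind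
  simp only [hsymm, eq_comm (a := (k : ℕ)) (b := (l : ℕ))]
  split_ifs <;> simp

theorem fdH2_isHermitian (n : ℕ) (V : ℝ → ℝ) : (fdH2 n V).IsHermitian := by
  refine isHermitian_diagonal_of_self_adjoint _ ?_
  ext k
  simp

/-- On samples of a 1-periodic function, `fdH1` is minus the central difference quotient. -/
theorem fdH1_mulVec_sample {n : ℕ} (hn : 3 ≤ n) {f : ℝ → ℂ} (hf : Function.Periodic f 1)
    (k : Fin n) :
    (fdH1 n).mulVec (fun l : Fin n => f (((l : ℕ) : ℝ) / (n : ℝ))) k =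
      -(n : ℂ) ^ 2 * (f ((k : ℕ) / (n : ℝ) + 1 / n) + f ((k : ℕ) / (n : ℝ) - 1 / n)
        - 2 * f ((k : ℕ) / (n : ℝ))) := by
  have hk := k.isLt
  have hn0 : (n : ℝ) ≠ 0 := by positivity
  let kp : Fin n := ⟨((k : ℕ) + 1) % n, Nat.mod_lt _ (by omega)⟩
  let km : Fin n := ⟨((k : ℕ) + n - 1) % n, Nat.mod_lt _ (by omega)⟩
  have hkp : f (((kp : ℕ) : ℝ) / n) = f ((k : ℕ) / (n : ℝ) + 1 / n) := by
    simp only [kp, succ_mod_eq_ite hk]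
    split_ifs with h
    · congr 1; push_cast; ring
    · rw [← hf]
      congr 1
      have : (n : ℝ) = (k : ℕ) + 1 := by exact_mod_cast (by omega : n = (k : ℕ) + 1)
      rw [← add_div, ← this, div_self hn0]; simp
  have hkm : f (((km : ℕ) : ℝ) / n) = f ((k : ℕ) / (n : ℝ) - 1 / n) := by
    simp only [km, pred_mod_eq_ite hk]
    split_ifs with h
    · rw [← hf ((k : ℕ) / (n : ℝ) - 1 / n), h, Nat.cast_sub (by omega)]
      congr 1; field_simp; push_cast; ring
    · rw [Nat.cast_sub (by omega)]
      congr 1; push_cast; ring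
  have hentry : ∀ l : Fin n, fdH1 n k l = (if l = k then 2 * (n : ℂ) ^ 2 else 0)
      + (if l = kp then -(n : ℂ) ^ 2 else 0) + (if l = km then -(n : ℂ) ^ 2 else 0) := by
    intro l
    have hl := l.isLt
    simp only [fdH1, of_apply, Fin.ext_iff, kp, km, succ_mod_eq_ite hk, pred_mod_eq_ite hk]
    by_cases h1 : (k : ℕ) + 1 < n <;> by_cases h2 : (k : ℕ) = 0 <;>
      simp only [h1, h2, if_true, if_false] <;> split_ifs <;>
      first | omega | simp
  simp only [mulVec, dotProduct, hentry, add_mul, ite_mul, zero_mul, Finset.sum_add_distrib,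
    Finset.sum_ite_eq', Finset.mem_univ, if_true, hkp, hkm]
  ring

/-- If `N ≥ 0` starts at `0` and `N' ≤ 2 C √N`, then `√N` grows at most linearly. -/
theorem sqrt_le_mul_of_hasDerivAt_le {N N' : ℝ → ℝ} {C t : ℝ} (ht : 0 ≤ t) (hC : 0 ≤ C)
    (hN : ∀ s ∈ Set.Icc 0 t, HasDerivAt N (N' s) s) (hpos : ∀ s, 0 ≤ N s) (h0 : N 0 = 0)
    (hN' : ∀ s ∈ Set.Icc 0 t, N' s ≤ 2 * C * √(N s)) : √(N t) ≤ C * t := by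
  refine le_of_forall_pos_le_add fun ε hε => ?_
  have hεN : ∀ s, 0 < N s + ε ^ 2 := fun s => by have := hpos s; positivity
  have hd : ∀ s ∈ Set.Icc 0 t,
      HasDerivAt (fun s => √(N s + ε ^ 2)) (N' s / (2 * √(N s + ε ^ 2))) s :=
    fun s hs => ((hN s hs).add_const _).sqrt (hεN s).ne'
  have key := (convex_Icc 0 t).image_sub_le_mul_sub_of_deriv_le
    (f := fun s => √(N s + ε ^ 2)) (C := C)
    (fun s hs => (hd s hs).continuousAt.continuousWithinAt)
    (fun s hs => (hd s (interior_subset hs)).differentiableAt.differentiableWithinAt)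
    (fun s hs => by
      rw [(hd s (interior_subset hs)).deriv, div_le_iff₀ (by have := hεN s; positivity)]
      have h1 := hN' s (interior_subset hs)
      have h2 : √(N s) ≤ √(N s + ε ^ 2) := Real.sqrt_le_sqrt (by nlinarith)
      nlinarith)
    0 ⟨le_rfl, ht⟩ t ⟨ht, le_rfl⟩ ht
  have h1 : √(N t) ≤ √(N t + ε ^ 2) := Real.sqrt_le_sqrt (by nlinarith)
  have h2 : √(N 0 + ε ^ 2) = ε := by rw [h0, zero_add, Real.sqrt_sq hε.le]
  simp only [h2, sub_zero] at key
  linarith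

/-- Energy estimate for a perturbed linear Schrödinger system: a source bounded by `c` in every
coordinate produces a Euclidean error of at most `c √n t`. -/
theorem evnorm_le_of_schrodinger_source {n : ℕ} {A : ℝ → Mat n} {D r : ℝ → Fin n → ℂ} {c t : ℝ}
    (ht : 0 ≤ t) (hc : 0 ≤ c) (hA : ∀ s, (A s).IsHermitian) (h0 : D 0 = 0)
    (hD : ∀ s ∈ Set.Icc 0 t, HasDerivAt D ((-Complex.I) • (A s).mulVec (D s) + r s) s)
    (hr : ∀ s ∈ Set.Icc 0 t, ∀ k, ‖r s k‖ ≤ c) :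
    evnorm (D t) ≤ c * √n * t := by
  have hev : evnorm (D t) = √(∑ k, ‖D t k‖ ^ 2) := EuclideanSpace.norm_eq _
  rw [hev]
  refine sqrt_le_mul_of_hasDerivAt_le (N := fun s => ∑ k, ‖D s k‖ ^ 2)
    (N' := fun s => ∑ k, 2 * inner ℝ (D s k) (((-Complex.I) • (A s).mulVec (D s) + r s) k))
    ht (by positivity) ?_ (fun s => by positivity) (by simp [h0]) ?_
  · intro s hs
    exact HasDerivAt.fun_sum fun k _ => (hasDerivAt_pi.1 (hD s hs) k).norm_sq
  · intro s hs
    have hzero : ∑ k, inner ℝ (D s k) (((-Complex.I) • (A s).mulVec (D s)) k) = 0 := by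
      have him : (star (D s) ⬝ᵥ (A s).mulVec (D s)).im = 0 :=
        (hA s).im_star_dotProduct_mulVec_self (D s)
      rw [← him, dotProduct, Complex.im_sum]
      refine Finset.sum_congr rfl fun k _ => ?_
      simp [Complex.inner]
      ring
    have hcs : ∑ k, ‖D s k‖ ≤ √n * √(∑ k, ‖D s k‖ ^ 2) := by
      rw [← Real.sqrt_mul (by positivity)]
      refine Real.le_sqrt_of_sq_le ?_
      simpa using sq_sum_le_card_mul_sum_sq (s := Finset.univ) (f := fun k => ‖D s k‖)
    have hsrc : ∑ k, inner ℝ (D s k) (r s k) ≤ c * ∑ k, ‖D s k‖ := by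
      rw [Finset.mul_sum]
      refine Finset.sum_le_sum fun k _ => (real_inner_le_norm _ _).trans ?_
      rw [mul_comm]
      exact mul_le_mul_of_nonneg_right (hr s hs k) (norm_nonneg _)
    simp only [Pi.add_apply, inner_add_right, ← Finset.mul_sum, Finset.sum_add_distrib, hzero]
    nlinarith [mul_le_mul_of_nonneg_left hcs hc]

theorem le_iSup_iSup_of_continuousOn {g : ℝ × ℝ → ℝ} {a b c d : ℝ}
    (hg : ContinuousOn g (Set.Icc a b ×ˢ Set.Icc c d)) (s : Set.Icc a b) (y : Set.Icc c d) :
    g (s, y) ≤ ⨆ (s : Set.Icc a b) (y : Set.Icc c d), g (s, y) := by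
  obtain ⟨B, hB⟩ := (isCompact_Icc.prod isCompact_Icc).bddAbove_image hg
  have hb : ∀ (s : Set.Icc a b) (y : Set.Icc c d), g (s, y) ≤ B := fun s y =>
    hB ⟨_, ⟨s.2, y.2⟩, rfl⟩
  have : Nonempty (Set.Icc c d) := ⟨y⟩
  refine (le_ciSup (f := fun y : Set.Icc c d => g (s, y)) ⟨B, ?_⟩ y).trans
    (le_ciSup (f := fun s : Set.Icc a b => ⨆ y : Set.Icc c d, g (s, y)) ⟨B, ?_⟩ s)
  · rintro _ ⟨y, rfl⟩; exact hb s y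
  · rintro _ ⟨s, rfl⟩; exact ciSup_le (hb s)

/-- **Spatial semidiscretization error for the Schrödinger equation with bilinear control
Hamiltonian.** The rescaled 2-norm difference between the sampled exact solution `φ` and the
solution `ψ` of the finite-difference semidiscretization is bounded by
`(t/(3n²)) (sup_{[0,T]} |f1|) sup_{s ∈ [0,t], y ∈ [0,1]} |∂ₓ⁴φ(s,y)|`. -/
theorem spatial_semidiscretization_error
    (n : ℕ) (hn : 3 ≤ n) (V : ℝ → ℝ)
    (hVper : Function.Periodic V 1) (hV : ContDiff ℝ 4 V)
    (f1 f2 : ℝ → ℝ) (hf1 : Continuous f1) (hf2 : Continuous f2)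
    (T : ℝ) (hT : 0 < T)
    (φ : ℝ → ℝ → ℂ) (φt : ℝ → ℝ → ℂ)
    (hφper : ∀ t x : ℝ, φ t (x + 1) = φ t x)
    (hφx : ∀ t : ℝ, ContDiff ℝ 4 (φ t))
    (hφt : ∀ x : ℝ, ∀ t ∈ Set.Icc (0:ℝ) T, HasDerivAt (fun τ => φ τ x) (φt t x) t)
    (hφtc : ContinuousOn (fun p : ℝ × ℝ => φt p.1 p.2)
      (Set.Icc (0:ℝ) T ×ˢ (Set.univ : Set ℝ)))
    (hφ4c : ContinuousOn (fun p : ℝ × ℝ => iteratedDeriv 4 (φ p.1) p.2)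
      (Set.Icc (0:ℝ) T ×ˢ (Set.univ : Set ℝ)))
    (hPDE : ∀ t ∈ Set.Icc (0:ℝ) T, ∀ x : ℝ,
      Complex.I * φt t x =
        -(f1 t : ℂ) * iteratedDeriv 2 (φ t) x + (f2 t : ℂ) * (V x : ℂ) * φ t x)
    (ψ : ℝ → (Fin n → ℂ))
    (hψ0 : ψ 0 = fun k : Fin n => φ 0 (((k : ℕ) : ℝ) / (n : ℝ)))
    (hψ : ∀ t ∈ Set.Icc (0:ℝ) T,
      HasDerivAt ψ
        ((-Complex.I) • ((f1 t : ℂ) • fdH1 n + (f2 t : ℂ) • fdH2 n V).mulVec (ψ t)) t) :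
    ∀ t ∈ Set.Icc (0:ℝ) T,
      (1 / Real.sqrt n) *
          evnorm (fun k : Fin n => φ t (((k : ℕ) : ℝ) / (n : ℝ)) - ψ t k) ≤
        (t / (3 * (n : ℝ)^2)) * (⨆ s : Set.Icc (0:ℝ) T, |f1 s|) *
          (⨆ (s : Set.Icc (0:ℝ) t) (y : Set.Icc (0:ℝ) 1),
            ‖iteratedDeriv 4 (φ s) y‖) := by
  intro t ht
  set F : ℝ := ⨆ s : Set.Icc (0:ℝ) T, |f1 s|
  set M : ℝ := ⨆ (s : Set.Icc (0:ℝ) t) (y : Set.Icc (0:ℝ) 1), ‖iteratedDeriv 4 (φ s) y‖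
  have hn0 : (0 : ℝ) < n := by positivity
  have hf1F : ∀ s ∈ Set.Icc (0:ℝ) T, |f1 s| ≤ F := by
    intro s hs
    obtain ⟨B, hB⟩ := isCompact_Icc.bddAbove_image (hf1.abs.continuousOn (s := Set.Icc (0:ℝ) T))
    exact le_ciSup (f := fun s : Set.Icc (0:ℝ) T => |f1 s|)
      ⟨B, by rintro _ ⟨s, rfl⟩; exact hB ⟨s, s.2, rfl⟩⟩ ⟨s, hs⟩
  have hφ4 : ∀ s ∈ Set.Icc (0:ℝ) t, ∀ x, ‖iteratedDeriv 4 (φ s) x‖ ≤ M := by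
    intro s hs x
    have hper : Function.Periodic (iteratedDeriv 4 (φ s)) 1 := by
      intro y
      simpa only [hφper] using (congrFun (iteratedDeriv_comp_add_const 4 (φ s) 1) y).symm
    rw [← Int.fract_add_floor x, ← mul_one ((⌊x⌋ : ℤ) : ℝ), hper.int_mul]
    exact le_iSup_iSup_of_continuousOn (g := fun p => ‖iteratedDeriv 4 (φ p.1) p.2‖)
      (hφ4c.norm.mono (Set.prod_mono (Set.Icc_subset_Icc_right ht.2) (Set.subset_univ _)))
      ⟨s, hs⟩ ⟨Int.fract x, Int.fract_nonneg x, (Int.fract_lt_one x).le⟩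
  have hF0 : 0 ≤ F := Real.iSup_nonneg fun _ => abs_nonneg _
  have hM0 : 0 ≤ M := Real.iSup_nonneg fun _ => Real.iSup_nonneg fun _ => norm_nonneg _
  let u : ℝ → Fin n → ℂ := fun s k => φ s (((k : ℕ) : ℝ) / (n : ℝ))
  let A : ℝ → Mat n := fun s => (f1 s : ℂ) • fdH1 n + (f2 s : ℂ) • fdH2 n V
  have hA : ∀ s, (A s).IsHermitian := fun s =>
    ((fdH1_isHermitian n).smul (Complex.conj_ofReal _)).add
      ((fdH2_isHermitian n V).smul (Complex.conj_ofReal _))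
  have main := evnorm_le_of_schrodinger_source (A := A) (D := fun s => u s - ψ s)
    (r := fun s k => φt s (((k : ℕ) : ℝ) / (n : ℝ)) + Complex.I * (A s).mulVec (u s) k)
    (c := F * (M / (3 * (n : ℝ) ^ 2))) ht.1 (by positivity) hA
    (by simp [u, hψ0]) ?_ ?_
  · have hsq : 0 < √(n : ℝ) := Real.sqrt_pos.2 hn0
    calc (1 / √(n : ℝ)) * evnorm (u t - ψ t)
        ≤ (1 / √(n : ℝ)) * (F * (M / (3 * (n : ℝ) ^ 2)) * √n * t) := by gcongr
      _ = _ := by field_simp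
  · intro s hs
    have hs' : s ∈ Set.Icc (0:ℝ) T := ⟨hs.1, hs.2.trans ht.2⟩
    have hu : HasDerivAt u (fun k : Fin n => φt s (((k : ℕ) : ℝ) / (n : ℝ))) s :=
      hasDerivAt_pi.2 fun k => hφt _ s hs'
    refine (hu.sub (hψ s hs')).congr_deriv ?_
    ext k
    simp only [mulVec_sub, A, Pi.add_apply, Pi.sub_apply, Pi.smul_apply, smul_eq_mul]
    ring
  · intro s hs k
    have hs' : s ∈ Set.Icc (0:ℝ) T := ⟨hs.1, hs.2.trans ht.2⟩
    set x : ℝ := ((k : ℕ) : ℝ) / (n : ℝ)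
    have hnC : (n : ℂ) ≠ 0 := by exact_mod_cast hn0.ne'
    have htr := norm_central_difference_sub_le (hφx s) (hφ4 s hs) x (h := 1 / n) (by positivity)
    have hAu : (A s).mulVec (u s) k = (f1 s : ℂ) * (-(n : ℂ) ^ 2 *
        (φ s (x + 1 / n) + φ s (x - 1 / n) - 2 * φ s x)) + (f2 s : ℂ) * (V x * φ s x) := by
      simp only [A, add_mulVec, smul_mulVec, Pi.add_apply, Pi.smul_apply, smul_eq_mul]
      rw [fdH1_mulVec_sample hn (hφper s) k, fdH2, mulVec_diagonal]
    have hφt' : φt s x = -Complex.I * (Complex.I * φt s x) := by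
      rw [← mul_assoc, neg_mul, Complex.I_mul_I, neg_neg, one_mul]
    have heq : φt s x + Complex.I * (A s).mulVec (u s) k = -Complex.I * f1 s * (n : ℂ) ^ 2 *
        (φ s (x + 1 / n) + φ s (x - 1 / n) - 2 * φ s x
          - ((1 / n : ℝ) : ℂ) ^ 2 * iteratedDeriv 2 (φ s) x) := by
      rw [hAu, hφt', hPDE s hs']
      push_cast
      field_simp
      ring
    rw [heq]
    simp only [norm_mul, norm_neg, Complex.norm_I, one_mul, norm_pow, Complex.norm_natCast,
      Complex.norm_real, Real.norm_eq_abs]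
    calc |f1 s| * (n : ℝ) ^ 2 * _ ≤ F * (n : ℝ) ^ 2 * (M * (1 / n) ^ 4 / 3) := by
          gcongr
          exact hf1F s hs'
      _ = F * (M / (3 * (n : ℝ) ^ 2)) := by field_simp
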